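/- arXiv:2001.09688 — 2 statements merged into one kernel-verified Lean document; each statement's English description precedes it below -/
import Mathlib

section
/- Let p1, q1, p2, q2 be pairwise distinct reals and X1, X2 ∈ S, with the trace denominators below nonzero. Then Tinv(p1,q1;p2,q2)(T(p1,q1;p2,q2)(X1,X2)) = (X1,X2), where Tinv(p1,q1;p2,q2)(X1,X2) = (B2(q1,X2) X1 Ã2(p1,X2) / tr[B2(q1,X2) X1 Ã2(p1,X2) K], B1(q2,X1) X2 Ã1(p2,X1) / tr[B1(q2,X1) X2 Ã1(p2,X1) K]); that is, Tinv is the inverse of T. -/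
open Matrix

/-- The space of real `m × n` matrices. -/
abbrev Mat (m n : ℕ) := Matrix (Fin m) (Fin n) ℝ

/-- `X` is a rank-one `K`-projection, i.e. `X ∈ S`. -/
def InS {m n : ℕ} (K : Matrix (Fin n) (Fin m) ℝ) (X : Mat m n) : Prop :=
  X * K * X = X ∧ X.rank = 1

/-- `A(p,q,λ,X) = 1ₘ − ((p−q)/(λ−q)) X K`. -/
noncomputable def Amat {m n : ℕ} (K : Matrix (Fin n) (Fin m) ℝ) (p q lam : ℝ) (X : Mat m n) :
    Matrix (Fin m) (Fin m) ℝ :=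
  1 - ((p - q) / (lam - q)) • (X * K)

/-- `Ã(p,q,λ,X) = 1ₙ − ((p−q)/(λ−q)) K X`. -/
noncomputable def Atil {m n : ℕ} (K : Matrix (Fin n) (Fin m) ℝ) (p q lam : ℝ) (X : Mat m n) :
    Matrix (Fin n) (Fin n) ℝ :=
  1 - ((p - q) / (lam - q)) • (K * X)

/-- `B(p,q,λ,X) = 1ₘ + ((p−q)/(λ−p)) X K`. -/
noncomputable def Bmat {m n : ℕ} (K : Matrix (Fin n) (Fin m) ℝ) (p q lam : ℝ) (X : Mat m n) :
    Matrix (Fin m) (Fin m) ℝ :=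
  1 + ((p - q) / (lam - p)) • (X * K)

/-- `B̃(p,q,λ,X) = 1ₙ + ((p−q)/(λ−p)) K X`. -/
noncomputable def Btil {m n : ℕ} (K : Matrix (Fin n) (Fin m) ℝ) (p q lam : ℝ) (X : Mat m n) :
    Matrix (Fin n) (Fin n) ℝ :=
  1 + ((p - q) / (lam - p)) • (K * X)

/-- `α₁₂⁻¹ = 1 − ((p1−q1)(p2−q2))/((p2−p1)(q2−q1)) · tr(K X1 K X2)`. -/
noncomputable def adenom {m n : ℕ} (K : Matrix (Fin n) (Fin m) ℝ) (p1 q1 p2 q2 : ℝ)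
    (X1 X2 : Mat m n) : ℝ :=
  1 - (p1 - q1) * (p2 - q2) / ((p2 - p1) * (q2 - q1)) * (K * X1 * K * X2).trace

/-- The Yang–Baxter map `R(p1,q1;p2,q2)`. -/
noncomputable def Rmap {m n : ℕ} (K : Matrix (Fin n) (Fin m) ℝ) (p1 q1 p2 q2 : ℝ)
    (X : Mat m n × Mat m n) : Mat m n × Mat m n :=
  ((adenom K p1 q1 p2 q2 X.1 X.2)⁻¹ •
      ((1 - ((p2 - q2) / (p2 - p1)) • (X.2 * K)) * X.1 *
        (1 - ((p2 - q2) / (q1 - q2)) • (K * X.2))),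
   (adenom K p1 q1 p2 q2 X.1 X.2)⁻¹ •
      ((1 - ((p1 - q1) / (q2 - q1)) • (X.1 * K)) * X.2 *
        (1 - ((p1 - q1) / (p1 - p2)) • (K * X.1))))

/-- Trace denominator of the first component of the map `T`:
`tr[A₂(p1,X2) X1 B̃₂(q1,X2) K]`. -/
noncomputable def Tden1 {m n : ℕ} (K : Matrix (Fin n) (Fin m) ℝ) (p1 q1 p2 q2 : ℝ)
    (X1 X2 : Mat m n) : ℝ :=
  (Amat K p2 q2 p1 X2 * X1 * Btil K p2 q2 q1 X2 * K).trace

/-- Trace denominator of the second component of the map `T`: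
`tr[A₁(p2,X1) X2 B̃₁(q2,X1) K]`. -/
noncomputable def Tden2 {m n : ℕ} (K : Matrix (Fin n) (Fin m) ℝ) (p1 q1 p2 q2 : ℝ)
    (X1 X2 : Mat m n) : ℝ :=
  (Amat K p1 q1 p2 X1 * X2 * Btil K p1 q1 q2 X1 * K).trace

/-- The (non-Yang–Baxter) map `T(p1,q1;p2,q2)`. -/
noncomputable def Tmap {m n : ℕ} (K : Matrix (Fin n) (Fin m) ℝ) (p1 q1 p2 q2 : ℝ)
    (X : Mat m n × Mat m n) : Mat m n × Mat m n :=
  ((Tden1 K p1 q1 p2 q2 X.1 X.2)⁻¹ • (Amat K p2 q2 p1 X.2 * X.1 * Btil K p2 q2 q1 X.2),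
   (Tden2 K p1 q1 p2 q2 X.1 X.2)⁻¹ • (Amat K p1 q1 p2 X.1 * X.2 * Btil K p1 q1 q2 X.1))

/-- Trace denominator of the first component of `T⁻¹`: `tr[B₂(q1,X2) X1 Ã₂(p1,X2) K]`. -/
noncomputable def Tinvden1 {m n : ℕ} (K : Matrix (Fin n) (Fin m) ℝ) (p1 q1 p2 q2 : ℝ)
    (X1 X2 : Mat m n) : ℝ :=
  (Bmat K p2 q2 q1 X2 * X1 * Atil K p2 q2 p1 X2 * K).trace

/-- Trace denominator of the second component of `T⁻¹`: `tr[B₁(q2,X1) X2 Ã₁(p2,X1) K]`. -/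
noncomputable def Tinvden2 {m n : ℕ} (K : Matrix (Fin n) (Fin m) ℝ) (p1 q1 p2 q2 : ℝ)
    (X1 X2 : Mat m n) : ℝ :=
  (Bmat K p1 q1 q2 X1 * X2 * Atil K p1 q1 p2 X1 * K).trace

/-- The map `Tinv(p1,q1;p2,q2)`, the inverse of `T(p1,q1;p2,q2)`. -/
noncomputable def Tinvmap {m n : ℕ} (K : Matrix (Fin n) (Fin m) ℝ) (p1 q1 p2 q2 : ℝ)
    (X : Mat m n × Mat m n) : Mat m n × Mat m n :=
  ((Tinvden1 K p1 q1 p2 q2 X.1 X.2)⁻¹ • (Bmat K p2 q2 q1 X.2 * X.1 * Atil K p2 q2 p1 X.2),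
   (Tinvden2 K p1 q1 p2 q2 X.1 X.2)⁻¹ • (Bmat K p1 q1 q2 X.1 * X.2 * Atil K p1 q1 p2 X.1))

/-- Trace denominator of the first component of `R⁻¹`: `tr[A₂(q1,X2) X1 B̃₂(p1,X2) K]`. -/
noncomputable def Rinvden1 {m n : ℕ} (K : Matrix (Fin n) (Fin m) ℝ) (p1 q1 p2 q2 : ℝ)
    (X1 X2 : Mat m n) : ℝ :=
  (Amat K p2 q2 q1 X2 * X1 * Btil K p2 q2 p1 X2 * K).trace

/-- Trace denominator of the second component of `R⁻¹`: `tr[B₁(p2,X1) X2 Ã₁(q2,X1) K]`. -/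
noncomputable def Rinvden2 {m n : ℕ} (K : Matrix (Fin n) (Fin m) ℝ) (p1 q1 p2 q2 : ℝ)
    (X1 X2 : Mat m n) : ℝ :=
  (Bmat K p1 q1 p2 X1 * X2 * Atil K p1 q1 q2 X1 * K).trace

/-- The map `Rinv(p1,q1;p2,q2)`, the inverse of `R(p1,q1;p2,q2)`. -/
noncomputable def Rinvmap {m n : ℕ} (K : Matrix (Fin n) (Fin m) ℝ) (p1 q1 p2 q2 : ℝ)
    (X : Mat m n × Mat m n) : Mat m n × Mat m n :=
  ((Rinvden1 K p1 q1 p2 q2 X.1 X.2)⁻¹ • (Amat K p2 q2 q1 X.2 * X.1 * Btil K p2 q2 p1 X.2),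
   (Rinvden2 K p1 q1 p2 q2 X.1 X.2)⁻¹ • (Bmat K p1 q1 p2 X.1 * X.2 * Atil K p1 q1 q2 X.1))

/-- `R` acting on components 1 and 2 of a triple. -/
noncomputable def R12t {m n : ℕ} (K : Matrix (Fin n) (Fin m) ℝ) (p1 q1 p2 q2 : ℝ)
    (X : Mat m n × Mat m n × Mat m n) : Mat m n × Mat m n × Mat m n :=
  ((Rmap K p1 q1 p2 q2 (X.1, X.2.1)).1, (Rmap K p1 q1 p2 q2 (X.1, X.2.1)).2, X.2.2)

/-- `R` acting on components 1 and 3 of a triple. -/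
noncomputable def R13t {m n : ℕ} (K : Matrix (Fin n) (Fin m) ℝ) (p1 q1 p3 q3 : ℝ)
    (X : Mat m n × Mat m n × Mat m n) : Mat m n × Mat m n × Mat m n :=
  ((Rmap K p1 q1 p3 q3 (X.1, X.2.2)).1, X.2.1, (Rmap K p1 q1 p3 q3 (X.1, X.2.2)).2)

/-- `R` acting on components 2 and 3 of a triple. -/
noncomputable def R23t {m n : ℕ} (K : Matrix (Fin n) (Fin m) ℝ) (p2 q2 p3 q3 : ℝ)
    (X : Mat m n × Mat m n × Mat m n) : Mat m n × Mat m n × Mat m n :=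
  (X.1, Rmap K p2 q2 p3 q3 (X.2.1, X.2.2))

/-- `T` acting on components 1 and 2 of a triple. -/
noncomputable def T12t {m n : ℕ} (K : Matrix (Fin n) (Fin m) ℝ) (p1 q1 p2 q2 : ℝ)
    (X : Mat m n × Mat m n × Mat m n) : Mat m n × Mat m n × Mat m n :=
  ((Tmap K p1 q1 p2 q2 (X.1, X.2.1)).1, (Tmap K p1 q1 p2 q2 (X.1, X.2.1)).2, X.2.2)

/-- `T` acting on components 1 and 3 of a triple. -/
noncomputable def T13t {m n : ℕ} (K : Matrix (Fin n) (Fin m) ℝ) (p1 q1 p3 q3 : ℝ)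
    (X : Mat m n × Mat m n × Mat m n) : Mat m n × Mat m n × Mat m n :=
  ((Tmap K p1 q1 p3 q3 (X.1, X.2.2)).1, X.2.1, (Tmap K p1 q1 p3 q3 (X.1, X.2.2)).2)

/-- `T` acting on components 2 and 3 of a triple. -/
noncomputable def T23t {m n : ℕ} (K : Matrix (Fin n) (Fin m) ℝ) (p2 q2 p3 q3 : ℝ)
    (X : Mat m n × Mat m n × Mat m n) : Mat m n × Mat m n × Mat m n :=
  (X.1, Tmap K p2 q2 p3 q3 (X.2.1, X.2.2))

/-- `T⁻¹` acting on components 2 and 3 of a triple. -/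
noncomputable def Tinv23t {m n : ℕ} (K : Matrix (Fin n) (Fin m) ℝ) (p2 q2 p3 q3 : ℝ)
    (X : Mat m n × Mat m n × Mat m n) : Mat m n × Mat m n × Mat m n :=
  (X.1, Tinvmap K p2 q2 p3 q3 (X.2.1, X.2.2))

/-- `R⁻¹` acting on components 2 and 3 of a triple. -/
noncomputable def Rinv23t {m n : ℕ} (K : Matrix (Fin n) (Fin m) ℝ) (p2 q2 p3 q3 : ℝ)
    (X : Mat m n × Mat m n × Mat m n) : Mat m n × Mat m n × Mat m n :=
  (X.1, Rinvmap K p2 q2 p3 q3 (X.2.1, X.2.2))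

/-!
Let `P = X1 K` and `Q = X2 K`. Both are idempotent and, `X1` having rank one, `P Q P = s P` with
`s = tr(P Q)`. The map `T` replaces `Q` by the dressed idempotent `Q' = D⁻¹ (1 + e P) Q (1 + f P)`,
where `D = 1 - c e s` is the common value of the two trace denominators. Two scalar relations
among the coefficients, `c + d + c d = -c e` and `c e = d f`, then give
`(1 + d Q') (1 + c Q) P = D P`. Passing to the opposite algebra gives the mirror identity
`P (1 + d Q) (1 + c Q') = D P`, which applies to the idempotents `K X1` and `K X2`.
Hence `B₂(q1, X2') X1' Ã₂(p1, X2') = D X1`, and normalizing by the trace `tr(D X1 K) = D` recovers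
`X1`; the other component follows by exchanging the indices.
-/

section DressedIdempotent

variable {R A : Type*} [CommRing R] [Ring A] [Algebra R A] {P Q : A} {s c d e f δ : R}

theorem one_add_smul_mul_one_add_smul (hQ : IsIdempotentElem Q) :
    (1 + d • Q) * (1 + c • Q) = 1 + (c + d + c * d) • Q := by
  simp only [mul_add, add_mul, mul_one, one_mul, smul_mul_smul_comm, hQ.eq]
  module

theorem one_add_smul_dressed_mul (hP : IsIdempotentElem P) (hQ : IsIdempotentElem Q)
    (hPQP : P * Q * P = s • P) (hadd : c + d + c * d = -(c * e)) (hmul : c * e = d * f)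
    (hδ : δ * (1 - c * e * s) = 1) :
    (1 + d • δ • ((1 + e • P) * Q * (1 + f • P))) * ((1 + c • Q) * P) = (1 - c * e * s) • P := by
  have hcore : Q * (1 + f • P) * ((1 + c • Q) * P) = (1 + c + f + f * c * s) • (Q * P) := by
    have hQPQP : Q * P * (Q * P) = s • (Q * P) := by
      rw [mul_assoc, ← mul_assoc P, hPQP, mul_smul_comm]
    calc Q * (1 + f • P) * ((1 + c • Q) * P)
        = Q * P + c • (Q * Q * P) + f • (Q * (P * P)) + (f * c) • (Q * P * (Q * P)) := by
          simp only [mul_add, add_mul, mul_one, one_mul, smul_mul_assoc, mul_smul_comm, mul_assoc]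
          module
      _ = (1 + c + f + f * c * s) • (Q * P) := by
          rw [hQ.eq, hP.eq, hQPQP]
          module
  have hscalar : d * δ * (1 + c + f + f * c * s) = -c := by
    linear_combination δ * hadd - δ * (1 + c * s) * hmul - c * hδ
  have hfactor : (1 + e • P) * (Q * P) = Q * P + (e * s) • P := by
    rw [add_mul, one_mul, smul_mul_assoc, ← mul_assoc, hPQP, smul_smul]
  calc (1 + d • δ • ((1 + e • P) * Q * (1 + f • P))) * ((1 + c • Q) * P)
      = (1 + c • Q) * P
          + (d * δ) • ((1 + e • P) * (Q * (1 + f • P) * ((1 + c • Q) * P))) := by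
        rw [add_mul (1 : A) (d • _), one_mul, smul_smul, smul_mul_assoc]
        simp only [mul_assoc]
    _ = (1 + c • Q) * P + (d * δ * (1 + c + f + f * c * s)) • (Q * P + (e * s) • P) := by
        rw [hcore, mul_smul_comm, hfactor, smul_smul]
    _ = (1 - c * e * s) • P := by
        rw [hscalar, add_mul, one_mul, smul_mul_assoc]
        module

theorem mul_one_add_smul_dressed (hP : IsIdempotentElem P) (hQ : IsIdempotentElem Q)
    (hPQP : P * Q * P = s • P) (hadd : c + d + c * d = -(c * e)) (hmul : c * e = d * f)
    (hδ : δ * (1 - c * e * s) = 1) :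
    P * (1 + d • Q) * (1 + c • δ • ((1 + e • P) * Q * (1 + f • P))) = (1 - c * e * s) • P := by
  have hop := one_add_smul_dressed_mul (A := Aᵐᵒᵖ) (P := .op P) (Q := .op Q) (c := d) (d := c)
    (e := f) (f := e) (s := s) (δ := δ) (congrArg MulOpposite.op hP.eq)
    (congrArg MulOpposite.op hQ.eq)
    (by simpa [mul_assoc] using congrArg MulOpposite.op hPQP)
    (by linear_combination hadd - hmul) hmul.symm (by rwa [← hmul])
  simpa [mul_assoc, ← hmul] using congrArg MulOpposite.unop hop

end DressedIdempotent

section RankOne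

variable {𝕜 m n : Type*} [Field 𝕜] [Fintype n] {X : Matrix m n 𝕜}

theorem exists_eq_vecMulVec_of_rank_le_one (hX : X.rank ≤ 1) :
    ∃ (u : m → 𝕜) (v : n → 𝕜), X = vecMulVec u v := by
  classical
  obtain ⟨u, hu⟩ := finrank_le_one_iff.1 hX
  choose v hv using fun j => hu ⟨X.mulVecLin (Pi.single j 1), LinearMap.mem_range_self _ _⟩
  refine ⟨u, v, ?_⟩
  ext i j
  simpa [vecMulVec_apply, mul_comm] using (congrFun (congrArg Subtype.val (hv j)) i).symm

theorem mul_mul_self_eq_trace_smul_of_rank_le_one [Fintype m] (hX : X.rank ≤ 1)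
    (M : Matrix n m 𝕜) : X * M * X = (X * M).trace • X := by
  obtain ⟨u, v, rfl⟩ := exists_eq_vecMulVec_of_rank_le_one hX
  rw [vecMulVec_mul, vecMulVec_mul_vecMulVec, trace_vecMulVec, vecMulVec_smul, dotProduct_comm]

end RankOne

section DressingCoefficients

-- The fractions are the scalars `c`, `d`, `e`, `f` in `A₂(p1)`, `B₂(q1)`, `A₁(p2)`, `B₁(q2)`, each
-- factor being written as `1 + (scalar) • (projection)`.

variable {𝕜 : Type*} [Field 𝕜] {p1 q1 p2 q2 : 𝕜}

theorem dressing_coeff_add_add_mul (h12 : p1 ≠ q2) (h21 : p2 ≠ q1) :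
    (q2 - p2) / (p1 - q2) + (p2 - q2) / (q1 - p2) +
        (q2 - p2) / (p1 - q2) * ((p2 - q2) / (q1 - p2)) =
      -((q2 - p2) / (p1 - q2) * ((q1 - p1) / (p2 - q1))) := by
  have h12' : p1 - q2 ≠ 0 := sub_ne_zero.2 h12
  have h21' : q1 - p2 ≠ 0 := sub_ne_zero.2 h21.symm
  rw [← neg_sub q1 p2]
  field_simp
  ring

theorem dressing_coeff_mul_eq_mul (p1 q1 p2 q2 : 𝕜) :
    (q2 - p2) / (p1 - q2) * ((q1 - p1) / (p2 - q1)) =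
      (p2 - q2) / (q1 - p2) * ((p1 - q1) / (q2 - p1)) := by
  rw [div_mul_div_comm, div_mul_div_comm]
  congr 1 <;> ring

end DressingCoefficients

section LaxFactors

variable {m n : ℕ} (K : Matrix (Fin n) (Fin m) ℝ) (p q lam p1 q1 p2 q2 : ℝ)
  (X X1 X2 : Mat m n)

theorem Amat_eq_Bmat : Amat K p q lam X = Bmat K q p lam X := by
  rw [Amat, Bmat, sub_eq_add_neg, ← neg_smul, ← neg_div, neg_sub]

theorem Atil_eq_Btil : Atil K p q lam X = Btil K q p lam X := by
  rw [Atil, Btil, sub_eq_add_neg, ← neg_smul, ← neg_div, neg_sub]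

theorem Btil_mul : Btil K p q lam X * K = K * Bmat K p q lam X := by
  simp only [Btil, Bmat, Matrix.add_mul, Matrix.mul_add, Matrix.one_mul, Matrix.mul_one,
    Matrix.smul_mul, Matrix.mul_smul, Matrix.mul_assoc]

theorem adenom_eq_one_sub_dressing_coeff :
    adenom K p1 q1 q2 p2 X1 X2 =
      1 - (q2 - p2) / (p1 - q2) * ((q1 - p1) / (p2 - q1)) * (K * X1 * K * X2).trace := by
  have hprod : (p1 - q2) * (p2 - q1) = -((q2 - p1) * (p2 - q1)) := by ring
  rw [adenom, div_mul_div_comm, hprod, div_neg]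
  ring

theorem adenom_swap : adenom K p2 q2 q1 p1 X2 X1 = adenom K p1 q1 q2 p2 X1 X2 := by
  have htrace : (K * X2 * K * X1).trace = (K * X1 * K * X2).trace := by
    rw [Matrix.mul_assoc (K * X2), trace_mul_comm, Matrix.mul_assoc (K * X1)]
  have hprod : (q1 - p2) * (p1 - q2) = (q2 - p1) * (p2 - q1) := by ring
  rw [adenom, adenom, htrace, hprod]
  ring

end LaxFactors

section InverseMap

variable {m n : ℕ} {K : Matrix (Fin n) (Fin m) ℝ} {X X1 X2 : Mat m n} {p1 q1 p2 q2 : ℝ}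

namespace InS

theorem isIdempotentElem_mul_right (hX : InS K X) : IsIdempotentElem (X * K) := by
  rw [IsIdempotentElem, ← Matrix.mul_assoc, hX.1]

theorem isIdempotentElem_mul_left (hX : InS K X) : IsIdempotentElem (K * X) := by
  rw [IsIdempotentElem, Matrix.mul_assoc, ← Matrix.mul_assoc X, hX.1]

theorem sandwich (hX : InS K X) (Y : Mat m n) :
    X * K * Y * K * X = (K * X * K * Y).trace • X := by
  have htrace : (X * (K * Y * K)).trace = (K * X * K * Y).trace := by
    rw [trace_mul_comm, Matrix.mul_assoc (K * Y), trace_mul_comm, Matrix.mul_assoc (K * X)]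
  rw [← htrace, ← mul_mul_self_eq_trace_smul_of_rank_le_one hX.2.le]
  simp only [Matrix.mul_assoc]

theorem trace_mul (hX : InS K X) : (X * K).trace = 1 := by
  have hX0 : X ≠ 0 := by
    rintro rfl
    simpa using hX.2
  have h : (X * K).trace • X = (1 : ℝ) • X := by
    rw [← mul_mul_self_eq_trace_smul_of_rank_le_one hX.2.le, hX.1, one_smul]
  exact smul_left_injective ℝ hX0 h

end InS

-- `adenom` appears with `p2` and `q2` exchanged because `T(p1,q1;p2,q2)` agrees with
-- `R(p1,q1;q2,p2)` on `S × S`.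
theorem Tden1_eq_adenom (hX1 : InS K X1) (hX2 : InS K X2) (h12 : p1 ≠ q2) (h21 : p2 ≠ q1) :
    Tden1 K p1 q1 p2 q2 X1 X2 = adenom K p1 q1 q2 p2 X1 X2 := by
  have htrace : (X1 * K * (X2 * K)).trace = (K * X1 * K * X2).trace := by
    rw [← Matrix.mul_assoc, trace_mul_comm]
    simp only [Matrix.mul_assoc]
  calc Tden1 K p1 q1 p2 q2 X1 X2
      = (X1 * K * (Bmat K p2 q2 q1 X2 * Bmat K q2 p2 p1 X2)).trace := by
        rw [Tden1, Amat_eq_Bmat, Matrix.mul_assoc, Btil_mul, Matrix.mul_assoc, trace_mul_comm]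
        simp only [Matrix.mul_assoc]
    _ = 1 - (q2 - p2) / (p1 - q2) * ((q1 - p1) / (p2 - q1)) * (K * X1 * K * X2).trace := by
        rw [Bmat, Bmat, one_add_smul_mul_one_add_smul hX2.isIdempotentElem_mul_right,
          dressing_coeff_add_add_mul h12 h21, Matrix.mul_add, Matrix.mul_one, Matrix.mul_smul,
          trace_add, trace_smul, hX1.trace_mul, htrace, smul_eq_mul]
        ring
    _ = adenom K p1 q1 q2 p2 X1 X2 := (adenom_eq_one_sub_dressing_coeff K p1 q1 p2 q2 X1 X2).symm

theorem Tden2_eq_adenom (hX1 : InS K X1) (hX2 : InS K X2) (h12 : p1 ≠ q2) (h21 : p2 ≠ q1) :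
    Tden2 K p1 q1 p2 q2 X1 X2 = adenom K p1 q1 q2 p2 X1 X2 :=
  calc Tden2 K p1 q1 p2 q2 X1 X2
      = Tden1 K p2 q2 p1 q1 X2 X1 := rfl
    _ = adenom K p2 q2 q1 p1 X2 X1 := Tden1_eq_adenom hX2 hX1 h21 h12
    _ = adenom K p1 q1 q2 p2 X1 X2 := adenom_swap K p1 q1 p2 q2 X1 X2

theorem Tmap_snd_eq (hX1 : InS K X1) (hX2 : InS K X2) (h12 : p1 ≠ q2) (h21 : p2 ≠ q1) :
    (Tmap K p1 q1 p2 q2 (X1, X2)).2 = (adenom K p1 q1 q2 p2 X1 X2)⁻¹ •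
      (Bmat K q1 p1 p2 X1 * X2 * Btil K p1 q1 q2 X1) := by
  rw [← Amat_eq_Bmat, ← Tden2_eq_adenom hX1 hX2 h12 h21, Tmap]

theorem Tmap_snd_mul (hX1 : InS K X1) (hX2 : InS K X2) (h12 : p1 ≠ q2) (h21 : p2 ≠ q1) :
    (Tmap K p1 q1 p2 q2 (X1, X2)).2 * K = (adenom K p1 q1 q2 p2 X1 X2)⁻¹ •
      (Bmat K q1 p1 p2 X1 * (X2 * K) * Bmat K p1 q1 q2 X1) := by
  rw [Tmap_snd_eq hX1 hX2 h12 h21, Matrix.smul_mul, Matrix.mul_assoc, Btil_mul]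
  simp only [Matrix.mul_assoc]

theorem mul_Tmap_snd (hX1 : InS K X1) (hX2 : InS K X2) (h12 : p1 ≠ q2) (h21 : p2 ≠ q1) :
    K * (Tmap K p1 q1 p2 q2 (X1, X2)).2 = (adenom K p1 q1 q2 p2 X1 X2)⁻¹ •
      (Btil K q1 p1 p2 X1 * (K * X2) * Btil K p1 q1 q2 X1) := by
  rw [Tmap_snd_eq hX1 hX2 h12 h21, Matrix.mul_smul, ← Matrix.mul_assoc, ← Matrix.mul_assoc,
    ← Btil_mul, Matrix.mul_assoc (Btil K q1 p1 p2 X1)]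

theorem Bmat_Tmap_snd_mul (hX1 : InS K X1) (hX2 : InS K X2) (h12 : p1 ≠ q2) (h21 : p2 ≠ q1)
    (hD : adenom K p1 q1 q2 p2 X1 X2 ≠ 0) :
    Bmat K p2 q2 q1 (Tmap K p1 q1 p2 q2 (X1, X2)).2 * (Bmat K q2 p2 p1 X2 * X1) =
      adenom K p1 q1 q2 p2 X1 X2 • X1 := by
  have hPQP : X1 * K * (X2 * K) * (X1 * K) = (K * X1 * K * X2).trace • (X1 * K) := by
    rw [← Matrix.smul_mul, ← hX1.sandwich]
    simp only [Matrix.mul_assoc]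
  have hP := one_add_smul_dressed_mul hX1.isIdempotentElem_mul_right
    hX2.isIdempotentElem_mul_right hPQP (dressing_coeff_add_add_mul h12 h21)
    (dressing_coeff_mul_eq_mul p1 q1 p2 q2)
    (adenom_eq_one_sub_dressing_coeff K p1 q1 p2 q2 X1 X2 ▸ inv_mul_cancel₀ hD)
  rw [← adenom_eq_one_sub_dressing_coeff] at hP
  calc Bmat K p2 q2 q1 (Tmap K p1 q1 p2 q2 (X1, X2)).2 * (Bmat K q2 p2 p1 X2 * X1)
      = Bmat K p2 q2 q1 (Tmap K p1 q1 p2 q2 (X1, X2)).2 *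
          (Bmat K q2 p2 p1 X2 * (X1 * K)) * X1 := by
        rw [Matrix.mul_assoc _ _ X1, Matrix.mul_assoc _ _ X1, hX1.1]
    _ = (adenom K p1 q1 q2 p2 X1 X2 • (X1 * K)) * X1 := by
        rw [Bmat, Tmap_snd_mul hX1 hX2 h12 h21]
        exact congrArg (· * X1) hP
    _ = adenom K p1 q1 q2 p2 X1 X2 • X1 := by
        rw [Matrix.smul_mul, hX1.1]

theorem mul_Btil_Tmap_snd (hX1 : InS K X1) (hX2 : InS K X2) (h12 : p1 ≠ q2) (h21 : p2 ≠ q1)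
    (hD : adenom K p1 q1 q2 p2 X1 X2 ≠ 0) :
    X1 * Btil K p2 q2 q1 X2 * Btil K q2 p2 p1 (Tmap K p1 q1 p2 q2 (X1, X2)).2 =
      adenom K p1 q1 q2 p2 X1 X2 • X1 := by
  have hPQP : K * X1 * (K * X2) * (K * X1) = (K * X1 * K * X2).trace • (K * X1) := by
    rw [← Matrix.mul_smul, ← hX1.sandwich]
    simp only [Matrix.mul_assoc]
  have hP := mul_one_add_smul_dressed hX1.isIdempotentElem_mul_left
    hX2.isIdempotentElem_mul_left hPQP (dressing_coeff_add_add_mul h12 h21)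
    (dressing_coeff_mul_eq_mul p1 q1 p2 q2)
    (adenom_eq_one_sub_dressing_coeff K p1 q1 p2 q2 X1 X2 ▸ inv_mul_cancel₀ hD)
  rw [← adenom_eq_one_sub_dressing_coeff] at hP
  calc X1 * Btil K p2 q2 q1 X2 * Btil K q2 p2 p1 (Tmap K p1 q1 p2 q2 (X1, X2)).2
      = X1 * (K * X1 * Btil K p2 q2 q1 X2 *
          Btil K q2 p2 p1 (Tmap K p1 q1 p2 q2 (X1, X2)).2) := by
        simp only [← Matrix.mul_assoc, hX1.1]
    _ = X1 * (adenom K p1 q1 q2 p2 X1 X2 • (K * X1)) := by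
        rw [Btil, Btil, mul_Tmap_snd hX1 hX2 h12 h21]
        exact congrArg (X1 * ·) hP
    _ = adenom K p1 q1 q2 p2 X1 X2 • X1 := by
        rw [Matrix.mul_smul, ← Matrix.mul_assoc, hX1.1]

theorem Tinvmap_Tmap_fst (hX1 : InS K X1) (hX2 : InS K X2) (h12 : p1 ≠ q2) (h21 : p2 ≠ q1)
    (hD : adenom K p1 q1 q2 p2 X1 X2 ≠ 0) :
    (Tinvmap K p1 q1 p2 q2 (Tmap K p1 q1 p2 q2 (X1, X2))).1 = X1 := by
  set D := adenom K p1 q1 q2 p2 X1 X2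
  set X' := Tmap K p1 q1 p2 q2 (X1, X2) with hX'
  have hfst : X'.1 = D⁻¹ • (Bmat K q2 p2 p1 X2 * X1 * Btil K p2 q2 q1 X2) := by
    rw [hX', Tmap, Tden1_eq_adenom hX1 hX2 h12 h21, Amat_eq_Bmat]
  have hnum : Bmat K p2 q2 q1 X'.2 * X'.1 * Atil K p2 q2 p1 X'.2 = D • X1 :=
    calc Bmat K p2 q2 q1 X'.2 * X'.1 * Atil K p2 q2 p1 X'.2
        = D⁻¹ • (Bmat K p2 q2 q1 X'.2 * (Bmat K q2 p2 p1 X2 * X1) *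
            Btil K p2 q2 q1 X2 * Btil K q2 p2 p1 X'.2) := by
          rw [hfst, Atil_eq_Btil]
          simp only [Matrix.mul_smul, Matrix.smul_mul, Matrix.mul_assoc]
      _ = D⁻¹ • D • (X1 * Btil K p2 q2 q1 X2 * Btil K q2 p2 p1 X'.2) := by
          rw [Bmat_Tmap_snd_mul hX1 hX2 h12 h21 hD, Matrix.smul_mul, Matrix.smul_mul]
      _ = D • X1 := by
          rw [inv_smul_smul₀ hD, mul_Btil_Tmap_snd hX1 hX2 h12 h21 hD]
  have hden : (D • X1 * K).trace = D := by
    rw [Matrix.smul_mul, trace_smul, hX1.trace_mul, smul_eq_mul, mul_one]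
  rw [Tinvmap, Tinvden1, hnum, hden, inv_smul_smul₀ hD]

theorem Tinv_inverts_T_general (hX1 : InS K X1) (hX2 : InS K X2) (h12 : p1 ≠ q2) (h21 : p2 ≠ q1)
    (hd : Tden1 K p1 q1 p2 q2 X1 X2 ≠ 0) :
    Tinvmap K p1 q1 p2 q2 (Tmap K p1 q1 p2 q2 (X1, X2)) = (X1, X2) := by
  have hD : adenom K p1 q1 q2 p2 X1 X2 ≠ 0 := Tden1_eq_adenom hX1 hX2 h12 h21 ▸ hd
  have hD' : adenom K p2 q2 q1 p1 X2 X1 ≠ 0 := (adenom_swap K p1 q1 p2 q2 X1 X2).symm ▸ hD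
  -- Exchanging the indices 1 and 2 swaps the components of `T` and `Tinv`, definitionally.
  exact Prod.ext (Tinvmap_Tmap_fst hX1 hX2 h12 h21 hD) (Tinvmap_Tmap_fst hX2 hX1 h21 h12 hD')

end InverseMap

/-- the explicit map `Tinv` inverts `T`: `Tinv(T(X1,X2)) = (X1,X2)`. -/
theorem Tinv_inverts_T
    (m n : ℕ) (hm : 0 < m) (hn : 0 < n)
    (K : Matrix (Fin n) (Fin m) ℝ) (hK : K.rank = min n m)
    (p1 q1 p2 q2 : ℝ)
    (hdist : List.Pairwise (· ≠ ·) [p1, q1, p2, q2])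
    (X1 X2 : Mat m n) (hX1 : InS K X1) (hX2 : InS K X2)
    (hd1 : Tden1 K p1 q1 p2 q2 X1 X2 ≠ 0)
    (hd2 : Tden2 K p1 q1 p2 q2 X1 X2 ≠ 0)
    (hd3 : Tinvden1 K p1 q1 p2 q2 (Tmap K p1 q1 p2 q2 (X1, X2)).1
      (Tmap K p1 q1 p2 q2 (X1, X2)).2 ≠ 0)
    (hd4 : Tinvden2 K p1 q1 p2 q2 (Tmap K p1 q1 p2 q2 (X1, X2)).1
      (Tmap K p1 q1 p2 q2 (X1, X2)).2 ≠ 0) :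
    Tinvmap K p1 q1 p2 q2 (Tmap K p1 q1 p2 q2 (X1, X2)) = (X1, X2) := by
  simp only [List.pairwise_cons, List.mem_cons, forall_eq_or_imp] at hdist
  exact Tinv_inverts_T_general hX1 hX2 hdist.1.2.2.1 hdist.2.1.1.symm hd1
end

section
/- Let p1, p2, p3, q1, q2, q3 be reals with p1, p2, p3 pairwise distinct, q1, q2, q3 pairwise distinct, and p_i ≠ q_j for all i, j, and let X1, X2, X3 ∈ S. Assume all trace denominators and α-factors occurring in the compositions below are nonzero. Then the mixed Yang–Baxter equation holds: Tinv_{23}(2,3) ∘ R_{13}(1,3) ∘ T_{12}(1,2) = T_{12}(1,2) ∘ R_{13}(1,3) ∘ Tinv_{23}(2,3) as maps on the triple (X1,X2,X3), where the subscripts indicate on which two components of the triple the maps R(p_i,q_i;p_j,q_j), T(p_i,q_i;p_j,q_j), Tinv(p_i,q_i;p_j,q_j) act. -/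
open Matrix

/-!
The three maps are one map: on rank-one `K`-projections `T(p₁, q₁; p₂, q₂) = R(p₁, q₁; q₂, p₂)` and
`T⁻¹(p₁, q₁; p₂, q₂) = R(q₁, p₁; p₂, q₂)`, so the mixed equation is the Yang–Baxter equation of `R`
with `p₂` and `q₂` exchanged.

With the Lax matrix `L_X(l) = (l - q) - (p - q) X K`, the map `R` sends `(X, Y)` to the pair
`(X', Y')` with `L_X L_Y = L_{Y'} L_{X'}`, and `X'` is the normalization of `L_Y(p)⁻¹ X L_Y(q)`.
Hence both sides of the Yang–Baxter equation turn `X₁` into the normalization of the same matrix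
`L_{X₃}(p₁)⁻¹ L_{X₂}(p₁)⁻¹ X₁ L_{X₂}(q₁) L_{X₃}(q₁)`; the third components agree because exchanging
the two factors is a symmetry of `R`. Both sides also refactorize the product
`L_{X₁} L_{X₂} L_{X₃}` in the opposite order, so cancelling the outer factors identifies the middle
components.
-/

/-! ### Lax factors of idempotents -/

section Lax

variable {R A : Type*} [CommRing R] [Ring A] [Algebra R A]

/-- The Lax factor `(l - q) - (p - q) P` of an idempotent `P`, with parameters `a = (p, q)`. For
`P² = P` its inverse is a scalar multiple of `lax a.swap l P`, so that no division is needed. -/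
def lax (a : R × R) (l : R) (P : A) : A := (l - a.2) • 1 - (a.1 - a.2) • P

/-- The conjugation `lax b a.1 Q ⁻¹ * P * lax b a.2 Q`, up to a scalar factor: it moves the
factor of `P` past the factor of `Q`. -/
def laxConj (a b : R × R) (P Q : A) : A := lax b.swap a.1 Q * P * lax b a.2 Q

/-- The factor by which `laxConj a b P Q` fails to be idempotent when `P * Q * P = t • P`. -/
def laxConst (a b : R × R) (t : R) : R :=
  (a.1 - b.1) * (a.2 - b.2) - (a.1 - a.2) * (b.1 - b.2) * t

theorem laxConst_swap (a b : R × R) (t : R) : laxConst b.swap a.swap t = laxConst a b t := by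
  simp only [laxConst, Prod.fst_swap, Prod.snd_swap]
  ring

theorem lax_mul_lax_swap {Q : A} (hQ : IsIdempotentElem Q) (b : R × R) (x y : R) :
    lax b x Q * lax b.swap y Q =
      ((x - b.2) * (y - b.1)) • 1 + ((b.1 - b.2) * (x - y)) • Q := by
  simp only [lax, Prod.fst_swap, Prod.snd_swap, sub_mul, mul_sub, smul_mul_smul_comm, mul_one,
    one_mul, hQ.eq]
  module

theorem lax_mul_lax_swap_self {Q : A} (hQ : IsIdempotentElem Q) (b : R × R) (x : R) :
    lax b x Q * lax b.swap x Q = ((x - b.1) * (x - b.2)) • 1 := by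
  rw [lax_mul_lax_swap hQ, sub_self, mul_zero, zero_smul, add_zero, mul_comm]

theorem lax_swap_mul_lax_self {Q : A} (hQ : IsIdempotentElem Q) (b : R × R) (x : R) :
    lax b.swap x Q * lax b x Q = ((x - b.1) * (x - b.2)) • 1 := by
  simpa [mul_comm] using lax_mul_lax_swap_self hQ b.swap x

theorem mul_lax_mul_lax_swap_mul {P Q : A} {t : R} (hP : IsIdempotentElem P)
    (hQ : IsIdempotentElem Q) (hPQP : P * Q * P = t • P) (a b : R × R) :
    P * lax b a.2 Q * lax b.swap a.1 Q * P = laxConst a b t • P := by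
  rw [mul_assoc P, lax_mul_lax_swap hQ, mul_add, mul_smul_comm, mul_smul_comm, mul_one, add_mul,
    smul_mul_assoc, smul_mul_assoc, hP.eq, hPQP, laxConst]
  module

theorem lax_mul_self {P : A} (hP : IsIdempotentElem P) (a : R × R) (l : R) :
    lax a l P * P = (l - a.1) • P := by
  rw [lax, sub_mul, smul_mul_assoc, smul_mul_assoc, one_mul, hP.eq]
  module

theorem lax_mul_one_sub_self {P : A} (hP : IsIdempotentElem P) (a : R × R) (l : R) :
    lax a l P * (1 - P) = (l - a.2) • (1 - P) := by
  rw [mul_sub, lax_mul_self hP, mul_one, lax]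
  module

theorem lax_eq_smul_one_add (a : R × R) (x l : R) (P : A) :
    lax a l P = (l - x) • 1 + lax a x P := by
  simp only [lax]
  module

-- Here the left-hand side is `L² - (M + N) L + M N` with `L = lax c l S`, and `L` acts on
-- `Z` as the scalar `l - x`.
theorem lax_solvent_mul_eq_zero {a b c : R × R} {P Q S Z : A} {x l : R}
    (hS : lax c l S * Z = (l - x) • Z) (hZ : lax a x P * lax b x Q * Z = 0) :
    (lax a l P * lax b l Q - (lax a l P + lax b l Q - lax c l S) * lax c l S) * Z = 0 := by
  calc _ = (lax a l P - (l - x) • 1) * (lax b l Q - (l - x) • 1) * Z := by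
        simp only [sub_mul, mul_sub, add_mul, mul_assoc, hS, mul_smul_comm, smul_mul_assoc, one_mul,
          mul_one]
        module
    _ = 0 := by
        rw [lax_eq_smul_one_add a x l P, lax_eq_smul_one_add b x l Q, add_sub_cancel_left,
          add_sub_cancel_left, hZ]

theorem lax_mul_lax_mul_smul_laxConj {P Q : A} (hP : IsIdempotentElem P) (hQ : IsIdempotentElem Q)
    (a b : R × R) (s : R) : lax a a.1 P * lax b a.1 Q * (s • laxConj a b P Q) = 0 := by
  have hker : lax a a.1 P * P = 0 := by rw [lax_mul_self hP, sub_self, zero_smul]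
  calc _ = s • (lax a a.1 P * (lax b a.1 Q * lax b.swap a.1 Q) * P * lax b a.2 Q) := by
        simp only [laxConj, mul_smul_comm, mul_assoc]
    _ = 0 := by
        rw [lax_mul_lax_swap_self hQ, mul_smul_comm, mul_one, smul_mul_assoc, hker, smul_zero,
          zero_mul, smul_zero]

theorem smul_laxConj_add_smul_laxConj {P Q : A} {t : R} (hPQP : P * Q * P = t • P)
    (hQPQ : Q * P * Q = t • Q) (a b : R × R) :
    (a.1 - a.2) • laxConj a b P Q + (b.1 - b.2) • laxConj b.swap a.swap Q P =
      laxConst a b t • ((a.1 - a.2) • P + (b.1 - b.2) • Q) := by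
  simp only [laxConj, lax, laxConst, Prod.fst_swap, Prod.snd_swap, sub_mul, mul_sub,
    smul_mul_assoc, mul_smul_comm, one_mul, mul_one, hPQP, hQPQ]
  module

end Lax

/-! ### Refactorization and cancellation -/

section Refactorization

variable {𝕜 A : Type*} [Field 𝕜] [Ring A] [Algebra 𝕜 A] {a b c : 𝕜 × 𝕜} {P Q P' Q' : A} {t : 𝕜}

theorem isIdempotentElem_inv_smul_laxConj (hP : IsIdempotentElem P) (hQ : IsIdempotentElem Q)
    (hPQP : P * Q * P = t • P) (ht : laxConst a b t ≠ 0) :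
    IsIdempotentElem ((laxConst a b t)⁻¹ • laxConj a b P Q) := by
  have hconj : laxConj a b P Q * laxConj a b P Q = laxConst a b t • laxConj a b P Q := by
    calc _ = lax b.swap a.1 Q * (P * lax b a.2 Q * lax b.swap a.1 Q * P) * lax b a.2 Q := by
          simp only [laxConj, mul_assoc]
      _ = _ := by
          rw [mul_lax_mul_lax_swap_mul hP hQ hPQP, mul_smul_comm, smul_mul_assoc, laxConj]
  rw [IsIdempotentElem, smul_mul_smul_comm, hconj, smul_smul, mul_assoc, inv_mul_cancel₀ ht,
    mul_one]

theorem lax_mul_lax_mul_one_sub_inv_smul_laxConj (hP : IsIdempotentElem P)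
    (hQ : IsIdempotentElem Q) (hPQP : P * Q * P = t • P) (ht : laxConst a b t ≠ 0) :
    lax a a.2 P * lax b a.2 Q * (1 - (laxConst a b t)⁻¹ • laxConj a b P Q) = 0 := by
  have hfix : P * lax b a.2 Q * ((laxConst a b t)⁻¹ • laxConj a b P Q) = P * lax b a.2 Q := by
    calc _ = (laxConst a b t)⁻¹ •
          (P * lax b a.2 Q * lax b.swap a.1 Q * P * lax b a.2 Q) := by
          simp only [laxConj, mul_smul_comm, mul_assoc]
      _ = _ := by
          rw [mul_lax_mul_lax_swap_mul hP hQ hPQP, smul_mul_assoc, inv_smul_smul₀ ht]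
  have hlax : lax a a.2 P = -((a.1 - a.2) • P) := by rw [lax, sub_self, zero_smul, zero_sub]
  rw [hlax, mul_sub, mul_one, neg_mul, neg_mul, smul_mul_assoc, smul_mul_assoc, hfix, sub_self]

theorem lax_mul_lax_eq_of_laxConj (hP : IsIdempotentElem P) (hQ : IsIdempotentElem Q)
    (hPQP : P * Q * P = t • P) (hQPQ : Q * P * Q = t • Q) (ht : laxConst a b t ≠ 0)
    (hP' : P' = (laxConst a b t)⁻¹ • laxConj a b P Q)
    (hQ' : Q' = (laxConst a b t)⁻¹ • laxConj b.swap a.swap Q P) (l : 𝕜) :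
    lax a l P * lax b l Q = lax b l Q' * lax a l P' := by
  have hsum : (a.1 - a.2) • P' + (b.1 - b.2) • Q' = (a.1 - a.2) • P + (b.1 - b.2) • Q := by
    rw [hP', hQ', smul_comm _ (laxConst a b t)⁻¹, smul_comm _ (laxConst a b t)⁻¹, ← smul_add,
      smul_laxConj_add_smul_laxConj hPQP hQPQ, inv_smul_smul₀ ht]
  have hQ'_lax : lax b l Q' = lax a l P + lax b l Q - lax a l P' := by
    simp only [lax]
    linear_combination (norm := module) (-1 : 𝕜) • hsum
  have hidem : IsIdempotentElem P' := hP' ▸ isIdempotentElem_inv_smul_laxConj hP hQ hPQP ht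
  have hrange := lax_solvent_mul_eq_zero (lax_mul_self hidem a l)
    (hP' ▸ lax_mul_lax_mul_smul_laxConj hP hQ a b _)
  have hkernel := lax_solvent_mul_eq_zero (lax_mul_one_sub_self hidem a l)
    (hP' ▸ lax_mul_lax_mul_one_sub_inv_smul_laxConj hP hQ hPQP ht)
  rw [hQ'_lax, ← sub_eq_zero, ← mul_one (_ - _), ← add_sub_cancel P' 1, mul_add, hrange, hkernel,
    add_zero]

theorem eq_of_forall_lax_mul_lax_mul_lax_eq [Infinite 𝕜] {S : A} (hP : IsIdempotentElem P)
    (hS : IsIdempotentElem S) (hb : b.1 ≠ b.2)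
    (h : ∀ l, lax c l S * lax b l Q * lax a l P = lax c l S * lax b l Q' * lax a l P) : Q = Q' := by
  classical
  obtain ⟨l, hl⟩ := Infinite.exists_notMem_finset ({a.1, a.2, c.1, c.2} : Finset 𝕜)
  simp only [Finset.mem_insert, Finset.mem_singleton, not_or, ← sub_ne_zero (a := l)] at hl
  obtain ⟨ha₁, ha₂, hc₁, hc₂⟩ := hl
  have hcancel (Z : A) : lax c.swap l S * (lax c l S * Z * lax a l P) * lax a.swap l P =
      ((l - c.1) * (l - c.2) * ((l - a.1) * (l - a.2))) • Z := by
    calc _ = lax c.swap l S * lax c l S * Z * (lax a l P * lax a.swap l P) := by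
          simp only [mul_assoc]
      _ = _ := by
          rw [lax_swap_mul_lax_self hS, lax_mul_lax_swap_self hP, smul_one_mul, mul_smul_one,
            smul_smul, mul_comm]
  have hlax : lax b l Q = lax b l Q' := by
    refine smul_right_injective A (mul_ne_zero (mul_ne_zero hc₁ hc₂) (mul_ne_zero ha₁ ha₂)) ?_
    simp only [← hcancel, h l]
  exact smul_right_injective A (sub_ne_zero.mpr hb) (sub_right_injective hlax)

theorem reversed_products_eq {M : Type*} [Semigroup M]
    {x₁ x₂ x₃ a₁ a₂ b₁ b₃ c₂ c₃ d₂ d₃ e₁ e₃ f₁ f₂ : M}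
    (h₁₂ : x₁ * x₂ = a₂ * a₁) (h₁₃ : a₁ * x₃ = b₃ * b₁) (h₂₃ : a₂ * b₃ = c₃ * c₂)
    (h₂₃' : x₂ * x₃ = d₃ * d₂) (h₁₃' : x₁ * d₃ = e₃ * e₁) (h₁₂' : e₁ * d₂ = f₂ * f₁) :
    c₃ * c₂ * b₁ = e₃ * f₂ * f₁ := by
  calc c₃ * c₂ * b₁ = x₁ * x₂ * x₃ := by rw [← h₂₃, mul_assoc, ← h₁₃, ← mul_assoc, ← h₁₂]
    _ = e₃ * f₂ * f₁ := by
      rw [mul_assoc, h₂₃', ← mul_assoc, h₁₃', mul_assoc, h₁₂', mul_assoc]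

end Refactorization

/-! ### Rank-one projections -/

section RankOne

variable {ι κ : Type*} [Fintype κ]

theorem exists_eq_vecMulVec_of_rank_eq_one {𝕜 : Type*} [Field 𝕜] {X : Matrix ι κ 𝕜}
    (hX : X.rank = 1) : ∃ u v, X = vecMulVec u v := by
  classical
  obtain ⟨⟨u, _⟩, -, hspan⟩ := finrank_eq_one_iff'.mp hX
  have hcol (j : κ) : ∃ c : 𝕜, c • u = X.col j := by
    obtain ⟨c, hc⟩ := hspan ⟨X.col j, Pi.single j 1, by simp⟩
    exact ⟨c, congrArg Subtype.val hc⟩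
  choose v hv using hcol
  refine ⟨u, v, ?_⟩
  ext i j
  rw [vecMulVec_apply, mul_comm]
  exact (congrFun (hv j) i).symm

variable [Fintype ι]

theorem vecMulVec_mul_mul_vecMulVec {R : Type*} [CommSemiring R] (u : ι → R) (v : κ → R)
    (M : Matrix κ ι R) :
    vecMulVec u v * M * vecMulVec u v = (vecMulVec u v * M).trace • vecMulVec u v := by
  rw [vecMulVec_mul, vecMulVec_mul_vecMulVec, trace_vecMulVec, vecMulVec_smul, dotProduct_comm]

/-- `X` is a rank-one `K`-projection, encoded as `X = u vᵀ` with `vᵀ K u = 1`. Over a field this is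
`X K X = X` together with `rank X = 1`. -/
structure IsRankOneProjection {R : Type*} [CommSemiring R] (K : Matrix κ ι R) (X : Matrix ι κ R) :
    Prop where
  exists_eq_vecMulVec : ∃ u v, X = vecMulVec u v
  trace_mul : (X * K).trace = 1

namespace IsRankOneProjection

section CommSemiring

variable {R : Type*} [CommSemiring R] {K : Matrix κ ι R} {X Y : Matrix ι κ R}

theorem mul_mul_self (hX : IsRankOneProjection K X) (M : Matrix κ ι R) :
    X * M * X = (X * M).trace • X := by
  obtain ⟨u, v, rfl⟩ := hX.exists_eq_vecMulVec
  exact vecMulVec_mul_mul_vecMulVec u v M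

theorem mul_mul (hX : IsRankOneProjection K X) (U : Matrix ι ι R) (V : Matrix κ κ R)
    (h : (U * X * V * K).trace = 1) : IsRankOneProjection K (U * X * V) := by
  obtain ⟨u, v, rfl⟩ := hX.exists_eq_vecMulVec
  exact ⟨⟨U *ᵥ u, v ᵥ* V, by rw [mul_vecMulVec, vecMulVec_mul]⟩, h⟩

theorem mul_mul_cancel (hX : IsRankOneProjection K X) : X * K * X = X := by
  rw [hX.mul_mul_self, hX.trace_mul, one_smul]

theorem isIdempotentElem_mul_left (hX : IsRankOneProjection K X) : IsIdempotentElem (X * K) := by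
  rw [IsIdempotentElem, ← Matrix.mul_assoc, hX.mul_mul_cancel]

theorem isIdempotentElem_mul_right (hX : IsRankOneProjection K X) : IsIdempotentElem (K * X) := by
  rw [IsIdempotentElem, Matrix.mul_assoc, ← Matrix.mul_assoc X, hX.mul_mul_cancel]

theorem left_mul_mul_mul (hX : IsRankOneProjection K X) (Y : Matrix ι κ R) :
    X * K * (Y * K) * (X * K) = (X * K * (Y * K)).trace • (X * K) := by
  rw [← Matrix.smul_mul, Matrix.mul_assoc X, ← hX.mul_mul_self]
  simp only [Matrix.mul_assoc]

theorem right_mul_mul_mul (hX : IsRankOneProjection K X) (Y : Matrix ι κ R) :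
    K * X * (K * Y) * (K * X) = (X * K * (Y * K)).trace • (K * X) := by
  rw [← Matrix.mul_smul, Matrix.mul_assoc X, ← hX.mul_mul_self]
  simp only [Matrix.mul_assoc]

theorem ext (hX : IsRankOneProjection K X) (hY : IsRankOneProjection K Y)
    (hleft : X * K = Y * K) (hright : K * X = K * Y) : X = Y := by
  rw [← hX.mul_mul_cancel, hleft, Matrix.mul_assoc, hright, ← Matrix.mul_assoc, hY.mul_mul_cancel]

end CommSemiring

theorem of_mul_mul_cancel {𝕜 : Type*} [Field 𝕜] {K : Matrix κ ι 𝕜} {X : Matrix ι κ 𝕜}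
    (hXKX : X * K * X = X) (hrank : X.rank = 1) : IsRankOneProjection K X := by
  obtain ⟨u, v, rfl⟩ := exists_eq_vecMulVec_of_rank_eq_one hrank
  have hne : vecMulVec u v ≠ 0 := fun h ↦ by simp [h] at hrank
  refine ⟨⟨u, v, rfl⟩, smul_left_injective 𝕜 hne ?_⟩
  simp only [← vecMulVec_mul_mul_vecMulVec, hXKX, one_smul]

end IsRankOneProjection

end RankOne

/-! ### The refactorization map -/

section TraceNormalize

variable {𝕜 ι κ : Type*} [Field 𝕜] [Fintype ι] [Fintype κ] {K : Matrix κ ι 𝕜}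

/-- The multiple `W'` of `W` with `tr (W' K) = 1`; it is `0` when `tr (W K) = 0`. -/
def traceNormalize (K : Matrix κ ι 𝕜) (W : Matrix ι κ 𝕜) : Matrix ι κ 𝕜 := (W * K).trace⁻¹ • W

theorem traceNormalize_smul {s : 𝕜} (hs : s ≠ 0) (W : Matrix ι κ 𝕜) :
    traceNormalize K (s • W) = traceNormalize K W := by
  rw [traceNormalize, smul_mul, trace_smul, smul_eq_mul, mul_inv, smul_smul, mul_right_comm,
    inv_mul_cancel₀ hs, one_mul, traceNormalize]

theorem traceNormalize_mul_traceNormalize_mul {W : Matrix ι κ 𝕜} (hW : (W * K).trace ≠ 0)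
    (U : Matrix ι ι 𝕜) (V : Matrix κ κ 𝕜) :
    traceNormalize K (U * traceNormalize K W * V) = traceNormalize K (U * W * V) := by
  rw [show traceNormalize K W = (W * K).trace⁻¹ • W from rfl, Matrix.mul_smul, Matrix.smul_mul,
    traceNormalize_smul (inv_ne_zero hW)]

end TraceNormalize

section Dressing

variable {R ι κ : Type*} [CommRing R] [Fintype ι] [Fintype κ] [DecidableEq ι] [DecidableEq κ]
  {K : Matrix κ ι R} {X Y : Matrix ι κ R}

/-- The first component of `R(a; b)(X, Y)` before normalization. The second component is
`dressing K b.swap a.swap Y X`. -/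
def dressing (K : Matrix κ ι R) (a b : R × R) (X Y : Matrix ι κ R) : Matrix ι κ R :=
  lax b.swap a.1 (Y * K) * X * lax b a.2 (K * Y)

theorem lax_mul_mul_comm (b : R × R) (l : R) (K : Matrix κ ι R) (Y : Matrix ι κ R) :
    K * lax b l (Y * K) = lax b l (K * Y) * K := by
  simp only [lax, Matrix.mul_sub, Matrix.sub_mul, Matrix.mul_smul, Matrix.smul_mul, Matrix.mul_one,
    Matrix.one_mul, Matrix.mul_assoc]

theorem dressing_mul (a b : R × R) (X Y : Matrix ι κ R) :
    dressing K a b X Y * K = laxConj a b (X * K) (Y * K) := by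
  rw [dressing, laxConj, Matrix.mul_assoc, ← lax_mul_mul_comm]
  simp only [Matrix.mul_assoc]

theorem mul_dressing (a b : R × R) (X Y : Matrix ι κ R) :
    K * dressing K a b X Y = laxConj a b (K * X) (K * Y) := by
  rw [dressing, laxConj, ← Matrix.mul_assoc, ← Matrix.mul_assoc, lax_mul_mul_comm]
  simp only [Matrix.mul_assoc]

theorem trace_dressing_mul (hX : IsRankOneProjection K X) (hY : IsRankOneProjection K Y)
    (a b : R × R) :
    (dressing K a b X Y * K).trace = laxConst a b (X * K * (Y * K)).trace := by
  have hP := hX.isIdempotentElem_mul_left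
  have hcycle : (dressing K a b X Y * K).trace =
      (X * K * lax b a.2 (Y * K) * lax b.swap a.1 (Y * K) * (X * K)).trace := by
    calc _ = (lax b.swap a.1 (Y * K) * (X * K) * (X * K * lax b a.2 (Y * K))).trace := by
          rw [dressing_mul, laxConj, Matrix.mul_assoc _ (X * K) (X * K * _),
            ← Matrix.mul_assoc (X * K) (X * K), hP.eq, Matrix.mul_assoc _ (X * K)]
      _ = _ := by rw [Matrix.trace_mul_comm, ← Matrix.mul_assoc]
  rw [hcycle, mul_lax_mul_lax_swap_mul hP hY.isIdempotentElem_mul_left (hX.left_mul_mul_mul Y),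
    trace_smul, hX.trace_mul, smul_eq_mul, mul_one]

end Dressing

/-- `(X', Y') = R(a; b)(X, Y)` for rank-one `K`-projections `X`, `Y` with parameters `a = (p₁, q₁)`
and `b = (p₂, q₂)`, the normalizing denominator being nonzero. -/
structure IsRefactorization {𝕜 ι κ : Type*} [Field 𝕜] [Fintype ι] [Fintype κ] [DecidableEq ι]
    [DecidableEq κ] (K : Matrix κ ι 𝕜) (a b : 𝕜 × 𝕜) (X Y X' Y' : Matrix ι κ 𝕜) : Prop where
  left : IsRankOneProjection K X
  right : IsRankOneProjection K Y
  trace_ne_zero : (dressing K a b X Y * K).trace ≠ 0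
  fst_eq : X' = traceNormalize K (dressing K a b X Y)
  snd_eq : Y' = traceNormalize K (dressing K b.swap a.swap Y X)

namespace IsRefactorization

variable {𝕜 ι κ : Type*} [Field 𝕜] [Fintype ι] [Fintype κ] [DecidableEq ι] [DecidableEq κ]
  {K : Matrix κ ι 𝕜} {a b c : 𝕜 × 𝕜} {X Y X' Y' : Matrix ι κ 𝕜}

theorem symm (h : IsRefactorization K a b X Y X' Y') :
    IsRefactorization K b.swap a.swap Y X Y' X' where
  left := h.right
  right := h.left
  trace_ne_zero := by
    rw [trace_dressing_mul h.right h.left, laxConst_swap, Matrix.trace_mul_comm,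
      ← trace_dressing_mul h.left h.right]
    exact h.trace_ne_zero
  fst_eq := h.snd_eq
  snd_eq := h.fst_eq

theorem fst (h : IsRefactorization K a b X Y X' Y') : IsRankOneProjection K X' := by
  rw [h.fst_eq, traceNormalize, dressing, ← Matrix.smul_mul, ← Matrix.smul_mul]
  refine h.left.mul_mul _ _ ?_
  rw [Matrix.smul_mul, Matrix.smul_mul, Matrix.smul_mul, trace_smul]
  exact inv_mul_cancel₀ h.trace_ne_zero

theorem snd (h : IsRefactorization K a b X Y X' Y') : IsRankOneProjection K Y' := h.symm.fst

theorem laxConst_ne_zero (h : IsRefactorization K a b X Y X' Y') :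
    laxConst a b (X * K * (Y * K)).trace ≠ 0 :=
  trace_dressing_mul h.left h.right a b ▸ h.trace_ne_zero

theorem fst_eq_smul (h : IsRefactorization K a b X Y X' Y') :
    X' = (laxConst a b (X * K * (Y * K)).trace)⁻¹ • dressing K a b X Y := by
  rw [h.fst_eq, traceNormalize, trace_dressing_mul h.left h.right]

theorem snd_eq_smul (h : IsRefactorization K a b X Y X' Y') :
    Y' = (laxConst a b (X * K * (Y * K)).trace)⁻¹ • dressing K b.swap a.swap Y X := by
  rw [h.symm.fst_eq_smul, laxConst_swap, Matrix.trace_mul_comm]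

theorem lax_mul_lax_left (h : IsRefactorization K a b X Y X' Y') (l : 𝕜) :
    lax a l (X * K) * lax b l (Y * K) = lax b l (Y' * K) * lax a l (X' * K) := by
  refine lax_mul_lax_eq_of_laxConj h.left.isIdempotentElem_mul_left
    h.right.isIdempotentElem_mul_left (h.left.left_mul_mul_mul Y) ?_ h.laxConst_ne_zero ?_ ?_ l
  · rw [h.right.left_mul_mul_mul, Matrix.trace_mul_comm]
  · rw [h.fst_eq_smul, Matrix.smul_mul, dressing_mul]
  · rw [h.snd_eq_smul, Matrix.smul_mul, dressing_mul]

theorem lax_mul_lax_right (h : IsRefactorization K a b X Y X' Y') (l : 𝕜) :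
    lax a l (K * X) * lax b l (K * Y) = lax b l (K * Y') * lax a l (K * X') := by
  refine lax_mul_lax_eq_of_laxConj h.left.isIdempotentElem_mul_right
    h.right.isIdempotentElem_mul_right (h.left.right_mul_mul_mul Y) ?_ h.laxConst_ne_zero ?_ ?_ l
  · rw [h.right.right_mul_mul_mul, Matrix.trace_mul_comm]
  · rw [h.fst_eq_smul, Matrix.mul_smul, mul_dressing]
  · rw [h.snd_eq_smul, Matrix.mul_smul, mul_dressing]

/-! ### The Yang–Baxter equation -/

theorem fst_eq_of_comp {Z X'' Z' : Matrix ι κ 𝕜} (hXY : IsRefactorization K a b X Y X' Y')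
    (hXZ : IsRefactorization K a c X' Z X'' Z') :
    X'' = traceNormalize K (lax c.swap a.1 (Z * K) * lax b.swap a.1 (Y * K) * X *
      (lax b a.2 (K * Y) * lax c a.2 (K * Z))) := by
  rw [hXZ.fst_eq, dressing, hXY.fst_eq, traceNormalize_mul_traceNormalize_mul hXY.trace_ne_zero,
    dressing]
  simp only [Matrix.mul_assoc]

variable {X₁ X₂ X₃ A₁ A₂ B₁ B₃ C₂ C₃ D₂ D₃ E₁ E₃ F₁ F₂ : Matrix ι κ 𝕜}

theorem yangBaxter_fst (h₁₂ : IsRefactorization K a b X₁ X₂ A₁ A₂)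
    (h₁₃ : IsRefactorization K a c A₁ X₃ B₁ B₃) (h₂₃' : IsRefactorization K b c X₂ X₃ D₂ D₃)
    (h₁₃' : IsRefactorization K a c X₁ D₃ E₁ E₃) (h₁₂' : IsRefactorization K a b E₁ D₂ F₁ F₂) :
    B₁ = F₁ := by
  rw [h₁₂.fst_eq_of_comp h₁₃, h₁₃'.fst_eq_of_comp h₁₂', h₂₃'.symm.lax_mul_lax_left,
    h₂₃'.lax_mul_lax_right]

theorem yangBaxter_snd [Infinite 𝕜] (hb : b.1 ≠ b.2) (h₁₂ : IsRefactorization K a b X₁ X₂ A₁ A₂)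
    (h₁₃ : IsRefactorization K a c A₁ X₃ B₁ B₃) (h₂₃ : IsRefactorization K b c A₂ B₃ C₂ C₃)
    (h₂₃' : IsRefactorization K b c X₂ X₃ D₂ D₃) (h₁₃' : IsRefactorization K a c X₁ D₃ E₁ C₃)
    (h₁₂' : IsRefactorization K a b E₁ D₂ B₁ F₂) : C₂ = F₂ := by
  refine h₂₃.fst.ext h₁₂'.snd ?_ ?_
  · exact eq_of_forall_lax_mul_lax_mul_lax_eq h₁₃.fst.isIdempotentElem_mul_left
      h₂₃.snd.isIdempotentElem_mul_left hb fun l ↦ reversed_products_eq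
        (h₁₂.lax_mul_lax_left l) (h₁₃.lax_mul_lax_left l) (h₂₃.lax_mul_lax_left l)
        (h₂₃'.lax_mul_lax_left l) (h₁₃'.lax_mul_lax_left l) (h₁₂'.lax_mul_lax_left l)
  · exact eq_of_forall_lax_mul_lax_mul_lax_eq h₁₃.fst.isIdempotentElem_mul_right
      h₂₃.snd.isIdempotentElem_mul_right hb fun l ↦ reversed_products_eq
        (h₁₂.lax_mul_lax_right l) (h₁₃.lax_mul_lax_right l) (h₂₃.lax_mul_lax_right l)
        (h₂₃'.lax_mul_lax_right l) (h₁₃'.lax_mul_lax_right l) (h₁₂'.lax_mul_lax_right l)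

theorem yangBaxter [Infinite 𝕜] (hb : b.1 ≠ b.2) (h₁₂ : IsRefactorization K a b X₁ X₂ A₁ A₂)
    (h₁₃ : IsRefactorization K a c A₁ X₃ B₁ B₃) (h₂₃ : IsRefactorization K b c A₂ B₃ C₂ C₃)
    (h₂₃' : IsRefactorization K b c X₂ X₃ D₂ D₃) (h₁₃' : IsRefactorization K a c X₁ D₃ E₁ E₃)
    (h₁₂' : IsRefactorization K a b E₁ D₂ F₁ F₂) : B₁ = F₁ ∧ C₂ = F₂ ∧ C₃ = E₃ := by
  obtain rfl : B₁ = F₁ := yangBaxter_fst h₁₂ h₁₃ h₂₃' h₁₃' h₁₂'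
  obtain rfl : E₃ = C₃ := yangBaxter_fst h₂₃'.symm h₁₃'.symm h₁₂.symm h₁₃.symm h₂₃.symm
  exact ⟨rfl, yangBaxter_snd hb h₁₂ h₁₃ h₂₃ h₂₃' h₁₃' h₁₂', rfl⟩

end IsRefactorization

/-! ### The maps `R`, `T` and `T⁻¹` -/

section Maps

variable {m n : ℕ} {K : Matrix (Fin n) (Fin m) ℝ} {X Y : Mat m n} {p q p₁ q₁ p₂ q₂ l : ℝ}

theorem InS.isRankOneProjection (hX : InS K X) : IsRankOneProjection K X :=
  .of_mul_mul_cancel hX.1 hX.2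

theorem Amat_eq_smul_lax (h : l ≠ q) : Amat K p q l X = (l - q)⁻¹ • lax (p, q) l (X * K) := by
  rw [Amat, lax, smul_sub, inv_smul_smul₀ (sub_ne_zero.mpr h), smul_smul, div_eq_inv_mul]

theorem Atil_eq_smul_lax (h : l ≠ q) : Atil K p q l X = (l - q)⁻¹ • lax (p, q) l (K * X) := by
  rw [Atil, lax, smul_sub, inv_smul_smul₀ (sub_ne_zero.mpr h), smul_smul, div_eq_inv_mul]

theorem Bmat_eq_Amat : Bmat K p q l X = Amat K q p l X := by
  rw [Bmat, Amat, ← neg_sub p q, neg_div, neg_smul, sub_neg_eq_add]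

theorem Btil_eq_Atil : Btil K p q l X = Atil K q p l X := by
  rw [Btil, Atil, ← neg_sub p q, neg_div, neg_smul, sub_neg_eq_add]

theorem Amat_mul_mul_Atil (hp : p₁ ≠ p₂) (hq : q₁ ≠ q₂) :
    Amat K q₂ p₂ p₁ Y * X * Atil K p₂ q₂ q₁ Y =
      ((p₁ - p₂) * (q₁ - q₂))⁻¹ • dressing K (p₁, q₁) (p₂, q₂) X Y := by
  rw [Amat_eq_smul_lax hp, Atil_eq_smul_lax hq, Matrix.smul_mul, Matrix.smul_mul, Matrix.mul_smul,
    smul_smul, ← mul_inv]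
  rfl

theorem isRefactorization_of_eq {X' Y' : Mat m n} (hX : IsRankOneProjection K X)
    (hY : IsRankOneProjection K Y) (hp : p₁ ≠ p₂) (hq : q₁ ≠ q₂)
    (htr : (Amat K q₂ p₂ p₁ Y * X * Atil K p₂ q₂ q₁ Y * K).trace ≠ 0)
    (hX' : X' = traceNormalize K (Amat K q₂ p₂ p₁ Y * X * Atil K p₂ q₂ q₁ Y))
    (hY' : Y' = traceNormalize K (Amat K p₁ q₁ q₂ X * Y * Atil K q₁ p₁ p₂ X)) :
    IsRefactorization K (p₁, q₁) (p₂, q₂) X Y X' Y' := by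
  have hscale := inv_ne_zero (mul_ne_zero (sub_ne_zero.mpr hp) (sub_ne_zero.mpr hq))
  have hscale' := inv_ne_zero (mul_ne_zero (sub_ne_zero.mpr hq.symm) (sub_ne_zero.mpr hp.symm))
  rw [Amat_mul_mul_Atil hp hq] at htr hX'
  rw [Amat_mul_mul_Atil hq.symm hp.symm, traceNormalize_smul hscale'] at hY'
  rw [traceNormalize_smul hscale] at hX'
  rw [Matrix.smul_mul, trace_smul] at htr
  exact ⟨hX, hY, right_ne_zero_of_smul htr, hX', hY'⟩

theorem adenom_comm : adenom K q₂ p₂ q₁ p₁ Y X = adenom K p₁ q₁ p₂ q₂ X Y := by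
  rw [adenom, adenom, Matrix.mul_assoc (K * Y), Matrix.trace_mul_comm, ← Matrix.mul_assoc]
  ring

theorem trace_Amat_mul_mul_Atil (hX : IsRankOneProjection K X) (hY : IsRankOneProjection K Y)
    (hp : p₁ ≠ p₂) (hq : q₁ ≠ q₂) :
    (Amat K q₂ p₂ p₁ Y * X * Atil K p₂ q₂ q₁ Y * K).trace = adenom K p₁ q₁ p₂ q₂ X Y := by
  have hp' := sub_ne_zero.mpr hp.symm
  have hq' := sub_ne_zero.mpr hq.symm
  have hcycle : (X * K * (Y * K)).trace = (K * X * K * Y).trace := by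
    rw [← Matrix.mul_assoc, Matrix.trace_mul_comm]
    simp only [Matrix.mul_assoc]
  rw [Amat_mul_mul_Atil hp hq, Matrix.smul_mul, trace_smul,
    trace_dressing_mul hX hY, hcycle, laxConst, adenom, smul_eq_mul, ← neg_sub p₂, ← neg_sub q₂,
    neg_mul_neg]
  field_simp

theorem Rmap_isRefactorization (hX : IsRankOneProjection K X) (hY : IsRankOneProjection K Y)
    (hp : p₁ ≠ p₂) (hq : q₁ ≠ q₂) (ha : adenom K p₁ q₁ p₂ q₂ X Y ≠ 0) :
    IsRefactorization K (p₁, q₁) (p₂, q₂) X Y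
      (Rmap K p₁ q₁ p₂ q₂ (X, Y)).1 (Rmap K p₁ q₁ p₂ q₂ (X, Y)).2 := by
  have htr := trace_Amat_mul_mul_Atil hX hY hp hq
  have htr' := trace_Amat_mul_mul_Atil hY hX hq.symm hp.symm
  refine isRefactorization_of_eq hX hY hp hq (htr ▸ ha) ?_ ?_
  · rw [traceNormalize, htr, Rmap, Amat, Atil, ← neg_sub p₂ q₂, ← neg_sub p₂ p₁, neg_div_neg_eq]
  · rw [traceNormalize, htr', adenom_comm, Rmap, Amat, Atil, ← neg_sub p₁ q₁, ← neg_sub p₁ p₂,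
      neg_div_neg_eq]

theorem Tmap_isRefactorization (hX : IsRankOneProjection K X) (hY : IsRankOneProjection K Y)
    (hpq : p₁ ≠ q₂) (hqp : q₁ ≠ p₂) (hd : Tden1 K p₁ q₁ p₂ q₂ X Y ≠ 0) :
    IsRefactorization K (p₁, q₁) (q₂, p₂) X Y
      (Tmap K p₁ q₁ p₂ q₂ (X, Y)).1 (Tmap K p₁ q₁ p₂ q₂ (X, Y)).2 := by
  rw [Tden1, Btil_eq_Atil] at hd
  refine isRefactorization_of_eq hX hY hpq hqp hd ?_ ?_
  · simp only [Tmap, Tden1, Btil_eq_Atil, traceNormalize]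
  · simp only [Tmap, Tden2, Btil_eq_Atil, traceNormalize]

theorem Tinvmap_isRefactorization (hX : IsRankOneProjection K X) (hY : IsRankOneProjection K Y)
    (hqp : q₁ ≠ p₂) (hpq : p₁ ≠ q₂) (hd : Tinvden1 K p₁ q₁ p₂ q₂ X Y ≠ 0) :
    IsRefactorization K (q₁, p₁) (p₂, q₂) X Y
      (Tinvmap K p₁ q₁ p₂ q₂ (X, Y)).1 (Tinvmap K p₁ q₁ p₂ q₂ (X, Y)).2 := by
  rw [Tinvden1, Bmat_eq_Amat] at hd
  refine isRefactorization_of_eq hX hY hqp hpq hd ?_ ?_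
  · simp only [Tinvmap, Tinvden1, Bmat_eq_Amat, traceNormalize]
  · simp only [Tinvmap, Tinvden2, Bmat_eq_Amat, traceNormalize]

end Maps

theorem mixed_YangBaxter_Tinv_R_T_general {m n : ℕ} {K : Matrix (Fin n) (Fin m) ℝ}
    {p1 q1 p2 q2 p3 q3 : ℝ} (hp13 : p1 ≠ p3) (hq13 : q1 ≠ q3) (hpq12 : p1 ≠ q2) (hpq21 : p2 ≠ q1)
    (hpq22 : p2 ≠ q2) (hpq23 : p2 ≠ q3) (hpq32 : p3 ≠ q2) {X1 X2 X3 : Mat m n} (hX1 : InS K X1)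
    (hX2 : InS K X2) (hX3 : InS K X3) {U V U' V' : Mat m n × Mat m n × Mat m n}
    (hU : U = T12t K p1 q1 p2 q2 (X1, X2, X3)) (hV : V = R13t K p1 q1 p3 q3 U)
    (hU' : U' = Tinv23t K p2 q2 p3 q3 (X1, X2, X3)) (hV' : V' = R13t K p1 q1 p3 q3 U')
    (hd1 : Tden1 K p1 q1 p2 q2 X1 X2 ≠ 0) (ha1 : adenom K p1 q1 p3 q3 U.1 U.2.2 ≠ 0)
    (hd3 : Tinvden1 K p2 q2 p3 q3 V.2.1 V.2.2 ≠ 0) (hd5 : Tinvden1 K p2 q2 p3 q3 X2 X3 ≠ 0)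
    (ha2 : adenom K p1 q1 p3 q3 U'.1 U'.2.2 ≠ 0) (hd7 : Tden1 K p1 q1 p2 q2 V'.1 V'.2.1 ≠ 0) :
    Tinv23t K p2 q2 p3 q3 V = T12t K p1 q1 p2 q2 V' := by
  subst hV hV' hU hU'
  have h₁₂ := Tmap_isRefactorization hX1.isRankOneProjection hX2.isRankOneProjection hpq12
    hpq21.symm hd1
  have h₁₃ := Rmap_isRefactorization h₁₂.fst hX3.isRankOneProjection hp13 hq13 ha1
  have h₂₃ := Tinvmap_isRefactorization h₁₂.snd h₁₃.snd hpq32.symm hpq23 hd3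
  have h₂₃' := Tinvmap_isRefactorization hX2.isRankOneProjection hX3.isRankOneProjection
    hpq32.symm hpq23 hd5
  have h₁₃' := Rmap_isRefactorization hX1.isRankOneProjection h₂₃'.snd hp13 hq13 ha2
  have h₁₂' := Tmap_isRefactorization h₁₃'.fst h₂₃'.fst hpq12 hpq21.symm hd7
  obtain ⟨hfst, hsnd, hthd⟩ := h₁₂.yangBaxter hpq22.symm h₁₃ h₂₃ h₂₃' h₁₃' h₁₂'
  exact Prod.ext hfst (Prod.ext hsnd hthd)

/-- the mixed Yang–Baxter equation
`Tinv₂₃ ∘ R₁₃ ∘ T₁₂ = T₁₂ ∘ R₁₃ ∘ Tinv₂₃`. -/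
theorem mixed_YangBaxter_Tinv_R_T
    (m n : ℕ) (hm : 0 < m) (hn : 0 < n)
    (K : Matrix (Fin n) (Fin m) ℝ) (hK : K.rank = min n m)
    (p1 q1 p2 q2 p3 q3 : ℝ)
    (hp : List.Pairwise (· ≠ ·) [p1, p2, p3])
    (hq : List.Pairwise (· ≠ ·) [q1, q2, q3])
    (hpq11 : p1 ≠ q1) (hpq12 : p1 ≠ q2) (hpq13 : p1 ≠ q3)
    (hpq21 : p2 ≠ q1) (hpq22 : p2 ≠ q2) (hpq23 : p2 ≠ q3)
    (hpq31 : p3 ≠ q1) (hpq32 : p3 ≠ q2) (hpq33 : p3 ≠ q3)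
    (X1 X2 X3 : Mat m n) (hX1 : InS K X1) (hX2 : InS K X2) (hX3 : InS K X3)
    -- intermediate triples of the two compositions
    (U V U' V' : Mat m n × Mat m n × Mat m n)
    (hU : U = T12t K p1 q1 p2 q2 (X1, X2, X3))
    (hV : V = R13t K p1 q1 p3 q3 U)
    (hU' : U' = Tinv23t K p2 q2 p3 q3 (X1, X2, X3))
    (hV' : V' = R13t K p1 q1 p3 q3 U')
    -- every trace denominator and α-factor occurring is nonzero
    (hd1 : Tden1 K p1 q1 p2 q2 X1 X2 ≠ 0)
    (hd2 : Tden2 K p1 q1 p2 q2 X1 X2 ≠ 0)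
    (ha1 : adenom K p1 q1 p3 q3 U.1 U.2.2 ≠ 0)
    (hd3 : Tinvden1 K p2 q2 p3 q3 V.2.1 V.2.2 ≠ 0)
    (hd4 : Tinvden2 K p2 q2 p3 q3 V.2.1 V.2.2 ≠ 0)
    (hd5 : Tinvden1 K p2 q2 p3 q3 X2 X3 ≠ 0)
    (hd6 : Tinvden2 K p2 q2 p3 q3 X2 X3 ≠ 0)
    (ha2 : adenom K p1 q1 p3 q3 U'.1 U'.2.2 ≠ 0)
    (hd7 : Tden1 K p1 q1 p2 q2 V'.1 V'.2.1 ≠ 0)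
    (hd8 : Tden2 K p1 q1 p2 q2 V'.1 V'.2.1 ≠ 0) :
    Tinv23t K p2 q2 p3 q3 V = T12t K p1 q1 p2 q2 V' := by
  exact mixed_YangBaxter_Tinv_R_T_general (List.rel_of_pairwise_cons hp (by simp))
    (List.rel_of_pairwise_cons hq (by simp)) hpq12 hpq21 hpq22 hpq23 hpq32 hX1 hX2 hX3 hU hV hU' hV'
    hd1 ha1 hd3 hd5 ha2 hd7
end
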